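/- The function A satisfies lim_{y→+∞} A(y) · y³ e^{2y²/3} = −(1/(2√π)) (3/2)^{5/2}; that is, inside the droplet A(y) ∼ −(1/(2√π)) (3/2)^{5/2} e^{−2y²/3}/y³ as y → +∞. -/

import Mathlib

open MeasureTheory Real Filter

/-- The error function `erf`. -/
noncomputable def erf (x : ℝ) : ℝ := (2 / Real.sqrt Real.pi) * ∫ t in (0 : ℝ)..x, Real.exp (-t ^ 2)

/-- The complementary error function `erfc`. -/
noncomputable def erfc (x : ℝ) : ℝ := 1 - erf x

noncomputable def A₁ (y : ℝ) : ℝ :=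
  -(1 / (2 * Real.sqrt (2 * Real.pi))) *
    ∫ t in Set.Ioi (0 : ℝ), Real.exp (-2 * (t - y) ^ 2) * erfc t

noncomputable def A₂ (y : ℝ) : ℝ :=
  (1 / Real.sqrt (2 * Real.pi)) *
    ∫ t in Set.Ioi (0 : ℝ),
      Real.exp (-2 * (t - y) ^ 2) * t * (Real.exp (-t ^ 2) / Real.sqrt Real.pi - t * erfc t)

noncomputable def A₃ (y : ℝ) : ℝ :=
  (1 / 4) * (1 + erf (Real.sqrt 2 * y)) *
    (-(y * Real.exp (-2 * y ^ 2)) / Real.sqrt (2 * Real.pi) +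
      (1 / 4 + y ^ 2) * (1 - erf (Real.sqrt 2 * y)))

noncomputable def A₄ (y : ℝ) : ℝ :=
  -(1 / Real.sqrt (2 * Real.pi)) *
    ∫ t₁ in Set.Ioi (0 : ℝ), ∫ t₂ in Set.Ioo (0 : ℝ) t₁,
      (1 / (t₁ - t₂)) *
        (Real.exp (-2 * (t₁ - y) ^ 2) * (erf (t₁ - t₂) + erf (Real.sqrt 2 * (t₂ - y))) +
          Real.exp (-2 * (t₂ - y) ^ 2) * (erf (t₁ - t₂) - erf (Real.sqrt 2 * (t₁ - y))))

noncomputable def A (y : ℝ) : ℝ := A₁ y + A₂ y + A₃ y + A₄ y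

/-!
Everything rests on two asymptotic tools. L'Hôpital's rule turns `g x ∼ κ e^{-c x²} / x^n` into
`-κ / (2 c) · e^{-c x²} / x^(n+1)` for the antiderivative of `g` that vanishes at `+∞`. Laplace's
method, completing the square and applying dominated convergence, turns `f t ∼ L e^{-b t²} / t^n`
into an equivalent of order `e^{-(ab/(a+b)) y²} / y^n` for `∫ e^{-a (t-y)²} f t dt`; with `a = 2`
and `b = 1` the rate is `2/3`.

`A₁ + A₂` is a Gaussian average of the second iterated integral of `erfc`, so both tools apply, and
`A₃` is of order at most `y² e^{-2y²}`. In the coordinates `u = t₁ - t₂`, `x = y - t₂`, the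
quantity `A₄ y` is a multiple of `∫_{x ≤ y} φ x` where `φ` does not depend on `y`. Each of the two
halves of the integrand has mean zero in `x`, by the formula for the convolution of `erf` with a
Gaussian, so this integral tends to `0` as `y → +∞` and L'Hôpital's rule reduces it to `φ y`. There
the dominant part is `-∫_{u > 1} e^{-2 (u-y)²} erfc u / u du`, to which Laplace's method applies.
-/

open Set Topology Asymptotics

/-! ### L'Hôpital's rule and Laplace's method at Gaussian scale -/

theorem tendsto_pow_mul_exp_mul_zero_of_isBigO {r : ℝ → ℝ} {c d : ℝ} (hcd : c < d) (n : ℕ)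
    (hr : r =O[atTop] fun x => rexp (-d * x ^ 2)) :
    Tendsto (fun x => x ^ n * rexp (c * x ^ 2) * r x) atTop (𝓝 0) := by
  have hO : (fun x => x ^ n * rexp (c * x ^ 2) * r x) =O[atTop]
      fun x => x ^ (n : ℝ) * rexp (-(d - c) * x ^ 2) := by
    refine ((isBigO_refl (fun x => x ^ n * rexp (c * x ^ 2)) atTop).mul hr).congr_right fun x => ?_
    rw [mul_assoc, ← Real.exp_add, rpow_natCast]
    ring_nf
  have hexp : Tendsto (fun x : ℝ => rexp (-(1 / 2) * x)) atTop (𝓝 0) :=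
    tendsto_exp_atBot.comp (tendsto_id.const_mul_atTop_of_neg (by norm_num))
  exact (hO.trans
    (rpow_mul_exp_neg_mul_sq_isLittleO_exp_neg (sub_pos.2 hcd) n).isBigO).trans_tendsto hexp

theorem hasDerivAt_exp_neg_mul_sq (c x : ℝ) :
    HasDerivAt (fun x : ℝ => rexp (-c * x ^ 2)) (-(2 * c * x) * rexp (-c * x ^ 2)) x := by
  refine ((hasDerivAt_pow 2 x).const_mul (-c)).exp.congr_deriv ?_
  norm_num
  ring

-- L'Hôpital's rule against `exp (-c * x ^ 2) / x ^ (n + 1)`.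
theorem tendsto_pow_succ_mul_exp_mul_of_hasDerivAt {G g : ℝ → ℝ} {c κ : ℝ} {n : ℕ} (hc : 0 < c)
    (hGg : ∀ᶠ x in atTop, HasDerivAt G (g x) x) (hG : Tendsto G atTop (𝓝 0))
    (hg : Tendsto (fun x => x ^ n * rexp (c * x ^ 2) * g x) atTop (𝓝 κ)) :
    Tendsto (fun x => x ^ (n + 1) * rexp (c * x ^ 2) * G x) atTop (𝓝 (-κ / (2 * c))) := by
  set D : ℝ → ℝ := fun x => rexp (-c * x ^ 2) * (x ^ (n + 1))⁻¹ with hD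
  set D' : ℝ → ℝ := fun x => -(rexp (-c * x ^ 2) * (x ^ n)⁻¹ * (2 * c + (n + 1) * (x ^ 2)⁻¹))
  have exp_neg_mul_exp (x : ℝ) : rexp (-c * x ^ 2) = (rexp (c * x ^ 2))⁻¹ := by
    rw [neg_mul, Real.exp_neg]
  have hasDerivAt_D : ∀ᶠ x in atTop, HasDerivAt D (D' x) x := by
    filter_upwards [eventually_gt_atTop 0] with x hx
    refine ((hasDerivAt_exp_neg_mul_sq c x).mul
      ((hasDerivAt_pow (n + 1) x).fun_inv (by positivity))).congr_deriv ?_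
    simp only [D', Nat.add_sub_cancel]
    push_cast
    field_simp
    ring
  have D'_ne_zero : ∀ᶠ x in atTop, D' x ≠ 0 := by
    filter_upwards [eventually_gt_atTop 0] with x hx
    exact neg_ne_zero.2 (by positivity)
  have tendsto_D : Tendsto D atTop (𝓝 0) := by
    have hexp : Tendsto (fun x : ℝ => rexp (-c * x ^ 2)) atTop (𝓝 0) := by
      simpa using tendsto_pow_mul_exp_mul_zero_of_isBigO hc 0 (isBigO_refl _ _)
    exact zero_mul (0 : ℝ) ▸ hexp.mul
      (tendsto_inv_atTop_zero.comp (tendsto_pow_atTop n.succ_ne_zero))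
  have tendsto_quotient : Tendsto (fun x => g x / D' x) atTop (𝓝 (-κ / (2 * c))) := by
    have hden : Tendsto (fun x : ℝ => 2 * c + (n + 1) * (x ^ 2)⁻¹) atTop (𝓝 (2 * c)) := by
      simpa using ((tendsto_inv_atTop_zero.comp
        (tendsto_pow_atTop (α := ℝ) two_ne_zero)).const_mul (n + 1 : ℝ)).const_add (2 * c)
    refine (hg.neg.div hden (by positivity)).congr' ?_
    filter_upwards [eventually_gt_atTop 0] with x hx
    simp only [D', exp_neg_mul_exp, Pi.div_apply]
    field_simp
  refine (HasDerivAt.lhopital_zero_atTop hGg hasDerivAt_D D'_ne_zero hG tendsto_D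
    tendsto_quotient).congr fun x => ?_
  simp only [hD, exp_neg_mul_exp, div_eq_mul_inv, mul_inv, inv_inv]
  ring

theorem exists_forall_abs_le_of_continuousOn_Ici_of_tendsto {f : ℝ → ℝ} {a L : ℝ}
    (hf : ContinuousOn f (Ici a)) (hL : Tendsto f atTop (𝓝 L)) : ∃ C, ∀ t ≥ a, |f t| ≤ C := by
  obtain ⟨T, hT⟩ := eventually_atTop.1 (hL.abs.eventually_le_const (lt_add_one |L|))
  obtain ⟨M, hM⟩ := isCompact_Icc.exists_bound_of_continuousOn
    (hf.mono (Icc_subset_Ici_self : Icc a T ⊆ Ici a))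
  refine ⟨max M (|L| + 1), fun t ht => ?_⟩
  rcases le_total t T with htT | hTt
  · exact (hM t ⟨ht, htT⟩).trans (le_max_left _ _)
  · exact (hT t hTt).trans (le_max_right _ _)

theorem integrableOn_Ioi_exp_mul_of_tendsto {f : ℝ → ℝ} {a b L : ℝ} (hb : 0 < b)
    (hf : ContinuousOn f (Ici a)) (hL : Tendsto f atTop (𝓝 L)) (y : ℝ) :
    IntegrableOn (fun t => rexp (-b * (t - y) ^ 2) * f t) (Ioi a) := by
  obtain ⟨C, hC⟩ := exists_forall_abs_le_of_continuousOn_Ici_of_tendsto hf hL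
  refine Integrable.mul_bdd (c := C) ((integrable_exp_neg_mul_sq hb).comp_sub_right y).integrableOn
    ((hf.mono Ioi_subset_Ici_self).aestronglyMeasurable measurableSet_Ioi) ?_
  filter_upwards [ae_restrict_mem measurableSet_Ioi] with t ht using hC t (le_of_lt ht)

theorem integrable_one_add_abs_pow_mul_exp_neg_mul_sq {a : ℝ} (ha : 0 < a) (n : ℕ) :
    Integrable fun s : ℝ => (1 + |s|) ^ n * rexp (-a * s ^ 2) := by
  have integrable_abs_pow (k : ℕ) : Integrable fun s : ℝ => |s| ^ k * rexp (-a * s ^ 2) := by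
    have hk : (-1 : ℝ) < k := by linarith [k.cast_nonneg (α := ℝ)]
    refine (integrable_rpow_mul_exp_neg_mul_sq ha hk).norm.congr (ae_of_all _ fun s => ?_)
    simp [rpow_natCast]
  have binomial (s : ℝ) : (1 + |s|) ^ n * rexp (-a * s ^ 2) =
      ∑ k ∈ Finset.range (n + 1), n.choose k * (|s| ^ k * rexp (-a * s ^ 2)) := by
    rw [add_comm, add_pow, Finset.sum_mul]
    exact Finset.sum_congr rfl fun k _ => by ring
  simp_rw [binomial]
  exact integrable_finsetSum _ fun k _ => (integrable_abs_pow k).const_mul _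

theorem tendsto_div_add_mul_atTop (s : ℝ) {c : ℝ} (hc : 0 < c) :
    Tendsto (fun y : ℝ => y / (s + c * y)) atTop (𝓝 c⁻¹) := by
  have h : Tendsto (fun y : ℝ => (s * y⁻¹ + c)⁻¹) atTop (𝓝 c⁻¹) := by
    simpa using ((tendsto_inv_atTop_zero.const_mul s).add_const c).inv₀ (by simpa using hc.ne')
  refine h.congr' ?_
  filter_upwards [eventually_gt_atTop 0] with y hy
  rw [show s + c * y = (s * y⁻¹ + c) * y by field_simp, div_mul_cancel_right₀ hy.ne']

-- Peetre's inequality trades the decay of `h` at `s + c * y` for growth in `s`.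
theorem pow_mul_abs_comp_add_le {h : ℝ → ℝ} {c C y : ℝ} {n : ℕ} (hc : 0 < c) (hy : 0 ≤ y)
    (hC : ∀ t, (1 + |t|) ^ n * |h t| ≤ C) (s : ℝ) :
    y ^ n * |h (s + c * y)| ≤ c⁻¹ ^ n * C * (1 + |s|) ^ n := by
  have peetre : y ≤ c⁻¹ * (1 + |s|) * (1 + |s + c * y|) := by
    rw [mul_assoc, ← div_eq_inv_mul, le_div_iff₀ hc]
    have : c * y ≤ |s + c * y| + |s| := by linarith [le_abs_self (s + c * y), neg_le_abs s]
    nlinarith [mul_nonneg (abs_nonneg s) (abs_nonneg (s + c * y))]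
  calc y ^ n * |h (s + c * y)|
      ≤ (c⁻¹ * (1 + |s|) * (1 + |s + c * y|)) ^ n * |h (s + c * y)| := by gcongr
    _ = c⁻¹ ^ n * (1 + |s|) ^ n * ((1 + |s + c * y|) ^ n * |h (s + c * y)|) := by
        rw [mul_pow, mul_pow]
        ring
    _ ≤ c⁻¹ ^ n * (1 + |s|) ^ n * C := by
        gcongr
        exact hC _
    _ = c⁻¹ ^ n * C * (1 + |s|) ^ n := by ring

theorem tendsto_pow_mul_integral_exp_mul_comp_add {h : ℝ → ℝ} {a c C L : ℝ} {n : ℕ}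
    (ha : 0 < a) (hc : 0 < c) (hm : AEStronglyMeasurable h) (hC : ∀ t, (1 + |t|) ^ n * |h t| ≤ C)
    (hL : Tendsto (fun t => t ^ n * h t) atTop (𝓝 L)) :
    Tendsto (fun y => y ^ n * ∫ s, rexp (-a * s ^ 2) * h (s + c * y)) atTop
      (𝓝 (L * c⁻¹ ^ n * √(π / a))) := by
  have tendsto_shift (s : ℝ) : Tendsto (fun y => s + c * y) atTop atTop :=
    tendsto_atTop_add_const_left _ _ (tendsto_id.const_mul_atTop hc)
  have integral_limit : ∫ s : ℝ, rexp (-a * s ^ 2) * (L * c⁻¹ ^ n) = L * c⁻¹ ^ n * √(π / a) := by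
    rw [integral_mul_const, integral_gaussian, mul_comm]
  simp_rw [← integral_const_mul, ← integral_limit]
  refine tendsto_integral_filter_of_dominated_convergence
    (fun s => c⁻¹ ^ n * C * ((1 + |s|) ^ n * rexp (-a * s ^ 2)))
    (.of_forall fun y => ?_) ?_
    ((integrable_one_add_abs_pow_mul_exp_neg_mul_sq ha n).const_mul _) (ae_of_all _ fun s => ?_)
  · have hexp : AEStronglyMeasurable fun s : ℝ => rexp (-a * s ^ 2) := by fun_prop
    exact (hexp.mul (hm.comp_measurePreserving (measurePreserving_add_right _ _))).const_mul _
  · filter_upwards [eventually_gt_atTop 0] with y hy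
    refine ae_of_all _ fun s => ?_
    calc ‖y ^ n * (rexp (-a * s ^ 2) * h (s + c * y))‖
        = y ^ n * |h (s + c * y)| * rexp (-a * s ^ 2) := by
          simp only [norm_mul, norm_pow, Real.norm_eq_abs, abs_of_pos hy, Real.abs_exp]
          ring
      _ ≤ c⁻¹ ^ n * C * (1 + |s|) ^ n * rexp (-a * s ^ 2) :=
          mul_le_mul_of_nonneg_right (pow_mul_abs_comp_add_le hc hy.le hC s) (exp_pos _).le
      _ = c⁻¹ ^ n * C * ((1 + |s|) ^ n * rexp (-a * s ^ 2)) := by ring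
  · refine (((hL.comp (tendsto_shift s)).mul
      ((tendsto_div_add_mul_atTop s hc).pow n)).const_mul (rexp (-a * s ^ 2))).congr' ?_
    filter_upwards [(tendsto_shift s).eventually_gt_atTop 0] with y hy
    simp only [Function.comp_apply, div_pow]
    field_simp

theorem exp_mul_integral_exp_mul_exp_mul {a b : ℝ} (hab : a + b ≠ 0) (h : ℝ → ℝ) (y : ℝ) :
    rexp (a * b / (a + b) * y ^ 2) * ∫ t, rexp (-a * (t - y) ^ 2) * (rexp (-b * t ^ 2) * h t) =
      ∫ s, rexp (-(a + b) * s ^ 2) * h (s + a / (a + b) * y) := by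
  have complete_square (s : ℝ) : a * b / (a + b) * y ^ 2 + (-a * (s + a / (a + b) * y - y) ^ 2 +
      -b * (s + a / (a + b) * y) ^ 2) = -(a + b) * s ^ 2 := by
    field_simp
    ring
  rw [← integral_const_mul, ← integral_add_right_eq_self _ (a / (a + b) * y)]
  refine integral_congr_ae (ae_of_all _ fun s => ?_)
  simp only [← complete_square, Real.exp_add, mul_assoc]

theorem exists_forall_one_add_abs_pow_mul_abs_le {f : ℝ → ℝ} {c L : ℝ} {n : ℕ}
    (hf : ContinuousOn f (Ici c)) (hL : Tendsto (fun t => t ^ n * f t) atTop (𝓝 L)) :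
    ∃ C, ∀ t ≥ c, (1 + |t|) ^ n * |f t| ≤ C := by
  have tendsto_ratio : Tendsto (fun t : ℝ => ((1 + 1 * t) / t) ^ n) atTop (𝓝 1) := by
    simpa using ((tendsto_div_add_mul_atTop 1 one_pos).inv₀ (by simp)).pow n
  have hlim : Tendsto (fun t => (1 + |t|) ^ n * f t) atTop (𝓝 L) := by
    refine (one_mul L ▸ tendsto_ratio.mul hL).congr' ?_
    filter_upwards [eventually_gt_atTop 0] with t ht
    rw [abs_of_pos ht, one_mul, div_pow]
    field_simp
  obtain ⟨C, hC⟩ := exists_forall_abs_le_of_continuousOn_Ici_of_tendsto (by fun_prop) hlim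
  refine ⟨C, fun t ht => ?_⟩
  simpa [abs_mul, abs_of_pos (by positivity : 0 < 1 + |t|)] using hC t ht

theorem tendsto_pow_mul_exp_mul_integral_Ioi {f : ℝ → ℝ} {a b c L : ℝ} {n : ℕ}
    (ha : 0 < a) (hb : 0 ≤ b) (hf : ContinuousOn f (Ici c))
    (hL : Tendsto (fun t => t ^ n * rexp (b * t ^ 2) * f t) atTop (𝓝 L)) :
    Tendsto (fun y => y ^ n * rexp (a * b / (a + b) * y ^ 2) *
        ∫ t in Ioi c, rexp (-a * (t - y) ^ 2) * f t) atTop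
      (𝓝 (L * ((a + b) / a) ^ n * √(π / (a + b)))) := by
  have hab : 0 < a + b := by positivity
  have continuousOn_exp_mul : ContinuousOn (fun t => rexp (b * t ^ 2) * f t) (Ici c) := by fun_prop
  obtain ⟨C, hC⟩ := exists_forall_one_add_abs_pow_mul_abs_le continuousOn_exp_mul
    (by simpa only [mul_assoc] using hL)
  set h : ℝ → ℝ := (Ioi c).indicator fun t => rexp (b * t ^ 2) * f t with hh
  have aestronglyMeasurable_h : AEStronglyMeasurable h :=
    (aestronglyMeasurable_indicator_iff measurableSet_Ioi).2
      ((continuousOn_exp_mul.mono Ioi_subset_Ici_self).aestronglyMeasurable measurableSet_Ioi)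
  have h_le (t : ℝ) : (1 + |t|) ^ n * |h t| ≤ max C 0 := by
    by_cases ht : t ∈ Ioi c
    · exact le_max_of_le_left (by simpa only [hh, indicator_of_mem ht] using hC t (le_of_lt ht))
    · simp [hh, ht]
  have tendsto_h : Tendsto (fun t => t ^ n * h t) atTop (𝓝 L) := by
    refine hL.congr' ?_
    filter_upwards [eventually_gt_atTop c] with t ht
    rw [hh, indicator_of_mem (mem_Ioi.2 ht), mul_assoc]
  have integral_eq (y : ℝ) : ∫ t in Ioi c, rexp (-a * (t - y) ^ 2) * f t =
      ∫ t, rexp (-a * (t - y) ^ 2) * (rexp (-b * t ^ 2) * h t) := by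
    rw [← integral_indicator measurableSet_Ioi]
    refine integral_congr_ae (ae_of_all _ fun t => ?_)
    by_cases ht : t ∈ Ioi c
    · simp only [hh, indicator_of_mem ht, neg_mul b, Real.exp_neg (b * t ^ 2),
        inv_mul_cancel_left₀ (exp_pos _).ne']
    · simp only [hh, indicator_of_notMem ht, mul_zero]
  simpa only [integral_eq, mul_assoc, exp_mul_integral_exp_mul_exp_mul hab.ne', inv_div] using
    tendsto_pow_mul_integral_exp_mul_comp_add hab (div_pos ha hab) aestronglyMeasurable_h h_le
      tendsto_h

theorem abs_exp_sub_exp_le {a b m : ℝ} (ha : a ≤ m) (hb : b ≤ m) :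
    |rexp a - rexp b| ≤ rexp m * |a - b| :=
  (convex_Iic m).norm_image_sub_le_of_norm_hasDerivWithin_le
    (fun x _ => (Real.hasDerivAt_exp x).hasDerivWithinAt)
    (fun x hx => by simpa using (hx : x ≤ m)) hb ha

theorem hasDerivAt_integral_Iic {f : ℝ → ℝ} (hf : Continuous f) (hint : Integrable f) (y : ℝ) :
    HasDerivAt (fun y => ∫ x in Iic y, f x) (f y) y := by
  have hsplit (z : ℝ) : ∫ x in Iic z, f x = (∫ x in Iic 0, f x) + ∫ x in 0..z, f x := by
    rw [← intervalIntegral.integral_Iic_sub_Iic hint.integrableOn hint.integrableOn,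
      add_sub_cancel]
  refine HasDerivAt.congr_of_eventuallyEq ?_ (.of_forall hsplit)
  exact (intervalIntegral.integral_hasDerivAt_right (hf.intervalIntegrable 0 y)
    (hf.stronglyMeasurableAtFilter _ _) hf.continuousAt).const_add _

section TriangleIntegral

variable {E : Type*} [NormedAddCommGroup E] [NormedSpace ℝ E]

theorem integral_Ioi_comp_sub_left (f : ℝ → E) (y : ℝ) :
    ∫ t in Ioi 0, f (y - t) = ∫ x in Iic y, f x := by
  have h := (Measure.measurePreserving_sub_left volume y).setIntegral_preimage_emb
    (MeasurableEquiv.subLeft y).measurableEmbedding f (Iio y)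
  rwa [preimage_const_sub_Iio, sub_self, ← integral_Iic_eq_integral_Iio] at h

theorem integral_Ioi_integral_Ioo_comp_sub {F : ℝ → ℝ → E}
    (hF : IntegrableOn (Function.uncurry F) (Ioi 0 ×ˢ Ioi 0)) :
    ∫ t₁ in Ioi 0, ∫ t₂ in Ioo 0 t₁, F (t₁ - t₂) t₂ = ∫ t₂ in Ioi 0, ∫ u in Ioi 0, F u t₂ := by
  set G : ℝ × ℝ → E := (Ioi 0 ×ˢ Ioi 0).indicator (Function.uncurry F) with hG
  have integrable_G : Integrable G (volume.prod volume) :=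
    hF.integrable_indicator (measurableSet_Ioi.prod measurableSet_Ioi)
  have integrable_shear : Integrable (fun z : ℝ × ℝ => G (z.1 - z.2, z.2)) (volume.prod volume) :=
    (measurePreserving_sub_prod volume volume).integrable_comp_of_integrable integrable_G
  have integral_Ioo (t₁ : ℝ) :
      ∫ t₂ in Ioo 0 t₁, F (t₁ - t₂) t₂ = ∫ t₂, G (t₁ - t₂, t₂) := by
    rw [← integral_indicator measurableSet_Ioo]
    congr with t₂
    simp [hG, indicator_apply, and_comm]
  have integral_Ioi (t₂ : ℝ) :
      ∫ u, G (u, t₂) = (Ioi 0).indicator (fun t => ∫ u in Ioi 0, F u t) t₂ := by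
    by_cases ht₂ : 0 < t₂
    · rw [indicator_of_mem (mem_Ioi.2 ht₂), ← integral_indicator measurableSet_Ioi]
      congr with u
      simp [hG, indicator_apply, ht₂]
    · simp [hG, ht₂]
  calc ∫ t₁ in Ioi 0, ∫ t₂ in Ioo 0 t₁, F (t₁ - t₂) t₂
      = ∫ t₁, ∫ t₂ in Ioo 0 t₁, F (t₁ - t₂) t₂ :=
        setIntegral_eq_integral_of_forall_compl_eq_zero fun t₁ ht₁ => by
          rw [Ioo_eq_empty ht₁, setIntegral_empty]
    _ = ∫ t₂, ∫ t₁, G (t₁ - t₂, t₂) := by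
        simp only [integral_Ioo]
        exact integral_integral_swap integrable_shear
    _ = ∫ t₂, ∫ u, G (u, t₂) :=
        integral_congr_ae (ae_of_all _ fun t₂ => integral_sub_right_eq_self (fun u => G (u, t₂)) t₂)
    _ = ∫ t₂ in Ioi 0, ∫ u in Ioi 0, F u t₂ := by
        simp only [integral_Ioi]
        exact integral_indicator measurableSet_Ioi

end TriangleIntegral

/-! ### The error function and its iterated integrals -/

theorem hasDerivAt_erf (x : ℝ) : HasDerivAt erf (2 / √π * rexp (-x ^ 2)) x := by
  have hcont : Continuous fun t : ℝ => rexp (-t ^ 2) := by fun_prop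
  exact (intervalIntegral.integral_hasDerivAt_right (hcont.intervalIntegrable 0 x)
    (hcont.stronglyMeasurableAtFilter _ _) hcont.continuousAt).const_mul _

theorem continuous_erf : Continuous erf :=
  continuous_iff_continuousAt.2 fun x => (hasDerivAt_erf x).continuousAt

@[fun_prop]
theorem continuous_erf_comp {X : Type*} [TopologicalSpace X] {f : X → ℝ} (hf : Continuous f) :
    Continuous fun x => erf (f x) :=
  continuous_erf.comp hf

theorem erf_zero : erf 0 = 0 := by simp [erf]

theorem erf_neg (x : ℝ) : erf (-x) = -erf x := by
  have h := intervalIntegral.integral_comp_neg (a := 0) (b := x) fun t : ℝ => rexp (-t ^ 2)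
  simp only [neg_sq, neg_zero] at h
  rw [erf, erf, h, intervalIntegral.integral_symm]
  ring

theorem tendsto_erf_atTop : Tendsto erf atTop (𝓝 1) := by
  have hint : IntegrableOn (fun t : ℝ => rexp (-t ^ 2)) (Ioi 0) := by
    simpa using (integrable_exp_neg_mul_sq one_pos).integrableOn
  have hgauss : ∫ t in Ioi (0 : ℝ), rexp (-t ^ 2) = √π / 2 := by
    simpa using integral_gaussian_Ioi 1
  have hlim := (intervalIntegral_tendsto_integral_Ioi 0 hint tendsto_id).const_mul (2 / √π)
  rwa [hgauss, show 2 / √π * (√π / 2) = 1 by field_simp] at hlim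

theorem hasDerivAt_erfc (x : ℝ) : HasDerivAt erfc (-(2 / √π * rexp (-x ^ 2))) x :=
  (hasDerivAt_erf x).const_sub 1

theorem tendsto_erfc_atTop : Tendsto erfc atTop (𝓝 0) :=
  sub_self (1 : ℝ) ▸ tendsto_erf_atTop.const_sub 1

@[fun_prop]
theorem continuous_erfc : Continuous erfc :=
  continuous_const.sub continuous_erf

theorem erfc_eq_integral_Ioi (x : ℝ) :
    erfc x = ∫ s in Ioi (0 : ℝ), 2 / √π * rexp (-(x + s) ^ 2) := by
  have hderiv (s : ℝ) : HasDerivAt (fun s => erf (x + s)) (2 / √π * rexp (-(x + s) ^ 2)) s :=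
    (hasDerivAt_erf (x + s)).comp_const_add x s
  rw [integral_Ioi_of_hasDerivAt_of_nonneg' (fun s _ => hderiv s) (fun s _ => by positivity)
    (tendsto_erf_atTop.comp (tendsto_atTop_add_const_left _ x tendsto_id)), add_zero, erfc]

theorem erfc_nonneg (x : ℝ) : 0 ≤ erfc x := by
  rw [erfc_eq_integral_Ioi]
  exact setIntegral_nonneg measurableSet_Ioi fun s _ => by positivity

theorem abs_erf_le_one (x : ℝ) : |erf x| ≤ 1 := by
  have h := erfc_nonneg (-x)
  rw [erfc, erf_neg] at h
  exact abs_le.2 ⟨by linarith, sub_nonneg.1 (erfc_nonneg x)⟩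

theorem erfc_le_exp_neg_sq {x : ℝ} (hx : 0 ≤ x) : erfc x ≤ rexp (-x ^ 2) := by
  have hint : IntegrableOn (fun s : ℝ => 2 / √π * rexp (-1 * s ^ 2)) (Ioi 0) :=
    ((integrable_exp_neg_mul_sq one_pos).const_mul _).integrableOn
  have hshift : IntegrableOn (fun s : ℝ => 2 / √π * rexp (-(x + s) ^ 2)) (Ioi 0) := by
    simpa using (((integrable_exp_neg_mul_sq one_pos).comp_add_left x).const_mul _).integrableOn
  calc erfc x = ∫ s in Ioi (0 : ℝ), 2 / √π * rexp (-(x + s) ^ 2) := erfc_eq_integral_Ioi x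
    _ ≤ ∫ s in Ioi (0 : ℝ), rexp (-x ^ 2) * (2 / √π * rexp (-1 * s ^ 2)) := by
        refine setIntegral_mono_on hshift (hint.const_mul _) measurableSet_Ioi fun s hs => ?_
        rw [mul_left_comm, ← Real.exp_add]
        gcongr
        nlinarith [mul_nonneg hx (le_of_lt hs)]
    _ = rexp (-x ^ 2) := by
        rw [integral_const_mul, integral_const_mul, integral_gaussian_Ioi, div_one]
        field_simp

theorem abs_erfc_le_exp_neg_sq {x : ℝ} (hx : 0 ≤ x) : |erfc x| ≤ rexp (-x ^ 2) :=
  (abs_of_nonneg (erfc_nonneg x)).trans_le (erfc_le_exp_neg_sq hx)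

theorem isBigO_erfc_mul {c : ℝ} (hc : 0 ≤ c) :
    (fun x => erfc (c * x)) =O[atTop] fun x => rexp (-c ^ 2 * x ^ 2) := by
  refine isBigO_iff.2 ⟨1, ?_⟩
  filter_upwards [eventually_ge_atTop 0] with x hx
  simpa [mul_pow] using abs_erfc_le_exp_neg_sq (mul_nonneg hc hx)

theorem abs_erf_sub_erf_le (x y : ℝ) : |erf x - erf y| ≤ 2 * |x - y| := by
  have hbound (t : ℝ) : ‖2 / √π * rexp (-t ^ 2)‖ ≤ 2 := by
    have hπ : 1 ≤ √π := Real.one_le_sqrt.2 (by linarith [pi_gt_three])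
    rw [norm_of_nonneg (by positivity)]
    exact (mul_le_of_le_one_right (by positivity) (exp_le_one_iff.2 (by nlinarith))).trans
      (div_le_self zero_le_two hπ)
  simpa using convex_univ.norm_image_sub_le_of_norm_hasDerivWithin_le
    (fun t _ => (hasDerivAt_erf t).hasDerivWithinAt) (fun t _ => hbound t) (mem_univ y) (mem_univ x)

/-- The first iterated integral `i erfc` of `erfc`: the antiderivative of `-erfc` that vanishes at
`+∞`. -/
noncomputable def ierfc (x : ℝ) : ℝ := rexp (-x ^ 2) / √π - x * erfc x

/-- The second iterated integral `i² erfc` of `erfc`: the antiderivative of `-ierfc` that vanishes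
at `+∞`. -/
noncomputable def iierfc (x : ℝ) : ℝ := (erfc x - 2 * x * ierfc x) / 4

theorem hasDerivAt_ierfc (x : ℝ) : HasDerivAt ierfc (-erfc x) x := by
  have hexp : HasDerivAt (fun x : ℝ => rexp (-x ^ 2)) (-(2 * x) * rexp (-x ^ 2)) x := by
    simpa using hasDerivAt_exp_neg_mul_sq 1 x
  refine ((hexp.div_const √π).sub ((hasDerivAt_id x).mul (hasDerivAt_erfc x))).congr_deriv ?_
  simp only [id_eq]
  ring

theorem hasDerivAt_iierfc (x : ℝ) : HasDerivAt iierfc (-ierfc x) x := by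
  refine (((hasDerivAt_erfc x).sub (((hasDerivAt_id x).const_mul 2).mul
    (hasDerivAt_ierfc x))).div_const 4).congr_deriv ?_
  simp only [id_eq, ierfc]
  ring

@[fun_prop]
theorem continuous_ierfc : Continuous ierfc :=
  continuous_iff_continuousAt.2 fun x => (hasDerivAt_ierfc x).continuousAt

@[fun_prop]
theorem continuous_iierfc : Continuous iierfc :=
  continuous_iff_continuousAt.2 fun x => (hasDerivAt_iierfc x).continuousAt

theorem tendsto_pow_mul_erfc_atTop (n : ℕ) : Tendsto (fun x => x ^ n * erfc x) atTop (𝓝 0) := by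
  simpa using tendsto_pow_mul_exp_mul_zero_of_isBigO zero_lt_one n
    (by simpa using isBigO_erfc_mul zero_le_one)

theorem tendsto_pow_mul_ierfc_atTop (n : ℕ) : Tendsto (fun x => x ^ n * ierfc x) atTop (𝓝 0) := by
  have hexp : Tendsto (fun x : ℝ => x ^ n * rexp (-x ^ 2)) atTop (𝓝 0) := by
    simpa using tendsto_pow_mul_exp_mul_zero_of_isBigO zero_lt_one n (isBigO_refl _ _)
  have hlim := (hexp.div_const √π).sub (tendsto_pow_mul_erfc_atTop (n + 1))
  rw [zero_div, sub_zero] at hlim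
  refine hlim.congr fun x => ?_
  rw [ierfc]
  ring

theorem tendsto_iierfc_atTop : Tendsto iierfc atTop (𝓝 0) := by
  have hlim := (tendsto_erfc_atTop.sub ((tendsto_pow_mul_ierfc_atTop 1).const_mul 2)).div_const 4
  rw [mul_zero, sub_zero, zero_div] at hlim
  refine hlim.congr fun x => ?_
  rw [iierfc]
  ring

theorem tendsto_pow_mul_exp_mul_erfc :
    Tendsto (fun x => x ^ 1 * rexp (1 * x ^ 2) * erfc x) atTop (𝓝 (1 / √π)) := by
  have hderiv (x : ℝ) : x ^ 0 * rexp (1 * x ^ 2) * -(2 / √π * rexp (-x ^ 2)) = -(2 / √π) := by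
    rw [pow_zero, one_mul, one_mul, Real.exp_neg]
    field_simp
  have h := tendsto_pow_succ_mul_exp_mul_of_hasDerivAt one_pos (.of_forall hasDerivAt_erfc)
    tendsto_erfc_atTop (tendsto_const_nhds.congr fun x => (hderiv x).symm)
  rwa [neg_neg, div_right_comm, mul_one, div_self two_ne_zero] at h

theorem tendsto_pow_mul_exp_mul_ierfc :
    Tendsto (fun x => x ^ 2 * rexp (1 * x ^ 2) * ierfc x) atTop (𝓝 (1 / (2 * √π))) := by
  have h := tendsto_pow_succ_mul_exp_mul_of_hasDerivAt one_pos (.of_forall hasDerivAt_ierfc)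
    (by simpa using tendsto_pow_mul_ierfc_atTop 0)
    (by simpa only [mul_neg] using tendsto_pow_mul_exp_mul_erfc.neg)
  convert h using 2
  field_simp

theorem tendsto_pow_mul_exp_mul_iierfc :
    Tendsto (fun x => x ^ 3 * rexp (1 * x ^ 2) * iierfc x) atTop (𝓝 (1 / (4 * √π))) := by
  have h := tendsto_pow_succ_mul_exp_mul_of_hasDerivAt one_pos (.of_forall hasDerivAt_iierfc)
    tendsto_iierfc_atTop (by simpa only [mul_neg] using tendsto_pow_mul_exp_mul_ierfc.neg)
  convert h using 2
  field_simp
  norm_num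

theorem integral_exp_mul_exp_neg_sq {a b : ℝ} (hab : a + b ≠ 0) (y : ℝ) :
    ∫ t, rexp (-a * (t - y) ^ 2) * rexp (-b * t ^ 2) =
      √(π / (a + b)) * rexp (-(a * b / (a + b) * y ^ 2)) := by
  have h := exp_mul_integral_exp_mul_exp_mul hab (fun _ => 1) y
  simp only [mul_one, integral_gaussian] at h
  rw [← h, Real.exp_neg, mul_comm, inv_mul_cancel_left₀ (exp_pos _).ne']

theorem integrable_exp_neg_mul_sq_mul_erf {a : ℝ} (ha : 0 < a) (b u : ℝ) :
    Integrable fun s => rexp (-a * s ^ 2) * erf (b * (s + u)) :=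
  (integrable_exp_neg_mul_sq ha).mul_bdd (c := 1)
    (by fun_prop) (ae_of_all _ fun _ => abs_erf_le_one _)

theorem hasDerivAt_integral_exp_neg_mul_sq_mul_erf {a : ℝ} (ha : 0 < a) (b u : ℝ) :
    HasDerivAt (fun u => ∫ s, rexp (-a * s ^ 2) * erf (b * (s + u)))
      (2 * b / √(b ^ 2 + a) * rexp (-(b ^ 2 * a / (b ^ 2 + a) * u ^ 2))) u := by
  set F' : ℝ → ℝ → ℝ := fun u s => rexp (-a * s ^ 2) * (2 / √π * rexp (-(b * (s + u)) ^ 2) * b)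
  have hasDerivAt_erf_comp (u s : ℝ) :
      HasDerivAt (fun u => rexp (-a * s ^ 2) * erf (b * (s + u))) (F' u s) u := by
    have hlin : HasDerivAt (fun u => b * (s + u)) b u := by
      simpa using ((hasDerivAt_id u).const_add s).const_mul b
    exact ((hasDerivAt_erf _).comp u hlin).const_mul _
  have norm_F'_le (u s : ℝ) : ‖F' u s‖ ≤ rexp (-a * s ^ 2) * (2 / √π * 1 * |b|) := by
    simp only [F', norm_mul, norm_div, Real.norm_eq_abs, Real.abs_exp, abs_two,
      abs_of_nonneg (sqrt_nonneg π)]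
    gcongr
    exact exp_le_one_iff.2 (by nlinarith)
  have integral_F' : ∫ s, F' u s =
      2 * b / √(b ^ 2 + a) * rexp (-(b ^ 2 * a / (b ^ 2 + a) * u ^ 2)) := by
    have h := integral_exp_mul_exp_neg_sq (a := b ^ 2) (b := a) (by positivity) (-u)
    calc ∫ s, F' u s
        = ∫ s, 2 * b / √π * (rexp (-b ^ 2 * (s - -u) ^ 2) * rexp (-a * s ^ 2)) := by
          congr with s
          simp only [F', sub_neg_eq_add, mul_pow, neg_mul]
          ring
      _ = 2 * b / √(b ^ 2 + a) * rexp (-(b ^ 2 * a / (b ^ 2 + a) * u ^ 2)) := by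
          rw [integral_const_mul, h, neg_sq, sqrt_div pi_nonneg]
          field_simp
  rw [← integral_F']
  exact (hasDerivAt_integral_of_dominated_loc_of_deriv_le univ_mem
    (.of_forall fun u => by fun_prop) (integrable_exp_neg_mul_sq_mul_erf ha b u) (by fun_prop)
    (ae_of_all _ fun s u _ => norm_F'_le u s) ((integrable_exp_neg_mul_sq ha).mul_const _)
    (ae_of_all _ fun s u _ => hasDerivAt_erf_comp u s)).2

theorem integral_exp_neg_mul_sq_mul_erf {a : ℝ} (ha : 0 < a) (b u : ℝ) :
    ∫ s, rexp (-a * s ^ 2) * erf (b * (s + u)) = √(π / a) * erf (b * √(a / (b ^ 2 + a)) * u) := by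
  set G : ℝ → ℝ := fun u => (∫ s, rexp (-a * s ^ 2) * erf (b * (s + u))) -
    √(π / a) * erf (b * √(a / (b ^ 2 + a)) * u)
  have hasDerivAt_G (u : ℝ) : HasDerivAt G 0 u := by
    have hlin : HasDerivAt (fun u => b * √(a / (b ^ 2 + a)) * u) (b * √(a / (b ^ 2 + a))) u := by
      simpa using (hasDerivAt_id u).const_mul (b * √(a / (b ^ 2 + a)))
    refine ((hasDerivAt_integral_exp_neg_mul_sq_mul_erf ha b u).sub
      (((hasDerivAt_erf _).comp u hlin).const_mul √(π / a))).congr_deriv (sub_eq_zero.2 ?_)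
    rw [mul_pow, mul_pow, sq_sqrt (by positivity), sqrt_div pi_nonneg, sqrt_div ha.le,
      ← mul_div_assoc (b ^ 2)]
    field_simp
  have G_zero : G 0 = 0 := by
    have hodd := integral_neg_eq_self (fun s => rexp (-a * s ^ 2) * erf (b * s)) volume
    simp only [neg_sq, mul_neg, erf_neg, integral_neg] at hodd
    simp only [G, add_zero, mul_zero, erf_zero, sub_zero]
    linarith
  have G_eq := is_const_of_deriv_eq_zero (fun u => (hasDerivAt_G u).differentiableAt)
    (fun u => (hasDerivAt_G u).deriv) u 0
  exact sub_eq_zero.1 (G_eq.trans G_zero)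

/-! ### The terms `A₁ + A₂` and `A₃` -/

theorem A₁_add_A₂_eq (y : ℝ) :
    A₁ y + A₂ y = -(2 / √(2 * π)) * ∫ t in Ioi 0, rexp (-2 * (t - y) ^ 2) * iierfc t := by
  have integrableOn_erfc : IntegrableOn (fun t => rexp (-2 * (t - y) ^ 2) * erfc t) (Ioi 0) :=
    integrableOn_Ioi_exp_mul_of_tendsto two_pos (by fun_prop) tendsto_erfc_atTop y
  have integrableOn_ierfc :
      IntegrableOn (fun t => rexp (-2 * (t - y) ^ 2) * (t ^ 1 * ierfc t)) (Ioi 0) :=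
    integrableOn_Ioi_exp_mul_of_tendsto two_pos (by fun_prop) (tendsto_pow_mul_ierfc_atTop 1) y
  have integral_iierfc : ∫ t in Ioi 0, rexp (-2 * (t - y) ^ 2) * iierfc t =
      1 / 4 * (∫ t in Ioi 0, rexp (-2 * (t - y) ^ 2) * erfc t) -
        1 / 2 * ∫ t in Ioi 0, rexp (-2 * (t - y) ^ 2) * (t ^ 1 * ierfc t) := by
    rw [← integral_const_mul, ← integral_const_mul,
      ← integral_sub (integrableOn_erfc.const_mul _) (integrableOn_ierfc.const_mul _)]
    congr with t
    rw [iierfc]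
    ring
  rw [integral_iierfc, A₁, A₂]
  simp only [← ierfc.eq_1, pow_one, mul_assoc]
  ring

theorem tendsto_pow_mul_exp_mul_A₁_add_A₂ :
    Tendsto (fun y => y ^ 3 * rexp (2 / 3 * y ^ 2) * (A₁ y + A₂ y)) atTop
      (𝓝 (-(2 / √(2 * π)) * (1 / (4 * √π) * (3 / 2) ^ 3 * √(π / 3)))) := by
  have h := (tendsto_pow_mul_exp_mul_integral_Ioi (a := 2) (c := 0) two_pos zero_le_one
    (by fun_prop) tendsto_pow_mul_exp_mul_iierfc).const_mul (-(2 / √(2 * π)))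
  norm_num only at h ⊢
  refine h.congr fun y => ?_
  rw [A₁_add_A₂_eq]
  ring

theorem tendsto_pow_mul_exp_mul_A₃ :
    Tendsto (fun y => y ^ 3 * rexp (2 / 3 * y ^ 2) * A₃ y) atTop (𝓝 0) := by
  have tendsto_one_add_erf : Tendsto (fun y => 1 + erf (√2 * y)) atTop (𝓝 (1 + 1)) :=
    (tendsto_erf_atTop.comp (tendsto_id.const_mul_atTop (by positivity))).const_add 1
  have tendsto_exp (n : ℕ) :
      Tendsto (fun y : ℝ => y ^ n * rexp (2 / 3 * y ^ 2) * rexp (-2 * y ^ 2)) atTop (𝓝 0) :=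
    tendsto_pow_mul_exp_mul_zero_of_isBigO (by norm_num) n (isBigO_refl _ _)
  have tendsto_erfc (n : ℕ) :
      Tendsto (fun y => y ^ n * rexp (2 / 3 * y ^ 2) * erfc (√2 * y)) atTop (𝓝 0) :=
    tendsto_pow_mul_exp_mul_zero_of_isBigO (d := 2) (by norm_num) n
      (by simpa using isBigO_erfc_mul (sqrt_nonneg 2))
  have h := (tendsto_one_add_erf.const_mul (1 / 4)).mul ((((tendsto_exp 4).div_const
    (√(2 * π))).neg.add ((tendsto_erfc 3).const_mul (1 / 4))).add (tendsto_erfc 5))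
  simp only [zero_div, neg_zero, mul_zero, add_zero] at h
  refine h.congr fun y => ?_
  rw [A₃, erfc]
  ring

/-! ### The term `A₄` -/

/-- One half of the integrand of `A₄`, in the coordinates `u = t₁ - t₂` (the gap) and
`x = y - t₂`. -/
noncomputable def gapTerm (u x : ℝ) : ℝ := rexp (-2 * (x - u) ^ 2) * (erf u - erf (√2 * x))

/-- The integrand of `A₄` without its factor `1 / (t₁ - t₂)`, in the coordinates `u = t₁ - t₂` and
`x = y - t₂`; the reflection `x ↦ u - x` exchanges its two halves. -/
noncomputable def gapKernel (u x : ℝ) : ℝ := gapTerm u x + gapTerm u (u - x)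

theorem gapKernel_eq (u x : ℝ) :
    gapKernel u x = rexp (-2 * (x - u) ^ 2) * (erf u - erf (√2 * x)) +
      rexp (-2 * x ^ 2) * (erf u - erf (√2 * (u - x))) := by
  rw [gapKernel, gapTerm, gapTerm, sub_sub_cancel_left, neg_sq]

theorem gapKernel_sub_self (u x : ℝ) : gapKernel u (u - x) = gapKernel u x := by
  rw [gapKernel, gapKernel, sub_sub_cancel, add_comm]

@[fun_prop]
theorem continuous_gapKernel {X : Type*} [TopologicalSpace X] {f g : X → ℝ} (hf : Continuous f)
    (hg : Continuous g) : Continuous fun z => gapKernel (f z) (g z) := by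
  unfold gapKernel gapTerm
  fun_prop

theorem integrable_gapTerm (u : ℝ) : Integrable (gapTerm u) :=
  ((integrable_exp_neg_mul_sq two_pos).comp_sub_right u).mul_bdd (c := 2) (by fun_prop)
    (ae_of_all _ fun x => by
      linarith [norm_sub_le (erf u) (erf (√2 * x)), abs_erf_le_one u, abs_erf_le_one (√2 * x),
        Real.norm_eq_abs (erf u), Real.norm_eq_abs (erf (√2 * x))])

theorem integral_gapTerm (u : ℝ) : ∫ x, gapTerm u x = 0 := by
  have integral_erf : ∫ s, rexp (-2 * s ^ 2) * erf (√2 * (s + u)) = √(π / 2) * erf u := by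
    rw [integral_exp_neg_mul_sq_mul_erf two_pos, ← sqrt_mul zero_le_two]
    norm_num
  calc ∫ x, gapTerm u x = ∫ s, gapTerm u (s + u) := (integral_add_right_eq_self _ u).symm
    _ = ∫ s, (rexp (-2 * s ^ 2) * erf u - rexp (-2 * s ^ 2) * erf (√2 * (s + u))) := by
        simp only [gapTerm, add_sub_cancel_right, mul_sub]
    _ = 0 := by
        rw [integral_sub ((integrable_exp_neg_mul_sq two_pos).mul_const _)
          (integrable_exp_neg_mul_sq_mul_erf two_pos _ _), integral_mul_const, integral_gaussian,
          integral_erf, sub_self]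

theorem integral_gapKernel (u : ℝ) : ∫ x, gapKernel u x = 0 := by
  simp only [gapKernel]
  rw [integral_add (integrable_gapTerm u) ((integrable_gapTerm u).comp_sub_left u),
    integral_sub_left_eq_self (gapTerm u), integral_gapTerm, add_zero]

theorem abs_erf_sub_erf_le_of_nonneg {x y : ℝ} (hx : 0 ≤ x) (hy : 0 ≤ y) :
    |erf x - erf y| ≤ rexp (-x ^ 2) + rexp (-y ^ 2) := by
  have hsub : erf x - erf y = erfc y - erfc x := by
    rw [erfc, erfc]
    ring
  rw [hsub]
  linarith [abs_sub (erfc y) (erfc x), abs_erfc_le_exp_neg_sq hx, abs_erfc_le_exp_neg_sq hy]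

theorem exp_mul_abs_erf_sub_erf_le {u x : ℝ} (hu : 0 ≤ u) (hx : 0 ≤ x) :
    rexp (-2 * x ^ 2) * |erf u - erf (√2 * (u - x))| ≤ 2 * rexp (-x ^ 2 - 2 / 3 * u ^ 2) := by
  rcases le_total x u with hxu | hux
  · have hsq : (√2 * (u - x)) ^ 2 = 2 * (u - x) ^ 2 := by rw [mul_pow, sq_sqrt zero_le_two]
    have h := abs_erf_sub_erf_le_of_nonneg hu (mul_nonneg (sqrt_nonneg 2) (sub_nonneg.2 hxu))
    calc rexp (-2 * x ^ 2) * |erf u - erf (√2 * (u - x))|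
        ≤ rexp (-2 * x ^ 2) * (rexp (-u ^ 2) + rexp (-(√2 * (u - x)) ^ 2)) := by gcongr
      _ = rexp (-2 * x ^ 2 + -u ^ 2) + rexp (-2 * x ^ 2 + -(2 * (u - x) ^ 2)) := by
          rw [hsq, mul_add, ← Real.exp_add, ← Real.exp_add]
      _ ≤ rexp (-x ^ 2 - 2 / 3 * u ^ 2) + rexp (-x ^ 2 - 2 / 3 * u ^ 2) := by
          gcongr
          · nlinarith
          · nlinarith [sq_nonneg (3 * x - 2 * u)]
      _ = 2 * rexp (-x ^ 2 - 2 / 3 * u ^ 2) := (two_mul _).symm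
  · have h : |erf u - erf (√2 * (u - x))| ≤ 2 := by
      linarith [abs_sub (erf u) (erf (√2 * (u - x))), abs_erf_le_one u,
        abs_erf_le_one (√2 * (u - x))]
    rw [mul_comm]
    gcongr
    nlinarith

theorem abs_gapKernel_add_le {u x : ℝ} (hu : 0 ≤ u) (hx : 0 ≤ x) :
    |gapKernel u x + rexp (-2 * (x - u) ^ 2) * erfc u| ≤ 3 * rexp (-x ^ 2 - 2 / 3 * u ^ 2) := by
  have first_le : rexp (-2 * (x - u) ^ 2) * |erfc (√2 * x)| ≤ rexp (-x ^ 2 - 2 / 3 * u ^ 2) := by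
    have h := abs_erfc_le_exp_neg_sq (mul_nonneg (sqrt_nonneg 2) hx)
    calc rexp (-2 * (x - u) ^ 2) * |erfc (√2 * x)|
        ≤ rexp (-2 * (x - u) ^ 2) * rexp (-(√2 * x) ^ 2) := by gcongr
      _ = rexp (-2 * (x - u) ^ 2 + -(2 * x ^ 2)) := by
          rw [← Real.exp_add, mul_pow, sq_sqrt zero_le_two]
      _ ≤ rexp (-x ^ 2 - 2 / 3 * u ^ 2) := by
          refine exp_le_exp.2 ?_
          nlinarith [sq_nonneg (3 * x - 2 * u)]
  have hsplit : gapKernel u x + rexp (-2 * (x - u) ^ 2) * erfc u =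
      rexp (-2 * (x - u) ^ 2) * erfc (√2 * x) +
        rexp (-2 * x ^ 2) * (erf u - erf (√2 * (u - x))) := by
    rw [gapKernel_eq, erfc, erfc]
    ring
  calc |gapKernel u x + rexp (-2 * (x - u) ^ 2) * erfc u|
      ≤ rexp (-2 * (x - u) ^ 2) * |erfc (√2 * x)| +
        rexp (-2 * x ^ 2) * |erf u - erf (√2 * (u - x))| := by
        rw [hsplit]
        refine (abs_add_le _ _).trans_eq ?_
        rw [abs_mul, abs_mul, Real.abs_exp, Real.abs_exp]
    _ ≤ 3 * rexp (-x ^ 2 - 2 / 3 * u ^ 2) := by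
        linarith [exp_mul_abs_erf_sub_erf_le hu hx]

theorem abs_gapKernel_le {u : ℝ} (hu : 0 ≤ u) (x : ℝ) :
    |gapKernel u x| ≤ 4 * rexp (-(1 / 4) * (u ^ 2 + x ^ 2)) := by
  wlog hx : 0 ≤ x generalizing x
  · refine gapKernel_sub_self u x ▸ (this (u - x) (by linarith)).trans ?_
    refine mul_le_mul_of_nonneg_left (exp_le_exp.2 ?_) zero_le_four
    nlinarith
  have exp_mul_erfc_le :
      |rexp (-2 * (x - u) ^ 2) * erfc u| ≤ rexp (-(1 / 4) * (u ^ 2 + x ^ 2)) := by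
    rw [abs_mul, Real.abs_exp]
    refine (mul_le_mul_of_nonneg_left (abs_erfc_le_exp_neg_sq hu) (exp_pos _).le).trans ?_
    rw [← Real.exp_add]
    gcongr
    nlinarith [sq_nonneg (8 * x - 9 * u)]
  have remainder_le : rexp (-x ^ 2 - 2 / 3 * u ^ 2) ≤ rexp (-(1 / 4) * (u ^ 2 + x ^ 2)) := by
    gcongr
    nlinarith
  have h := abs_sub (gapKernel u x + rexp (-2 * (x - u) ^ 2) * erfc u)
    (rexp (-2 * (x - u) ^ 2) * erfc u)
  rw [add_sub_cancel_right] at h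
  linarith [abs_gapKernel_add_le hu hx]

theorem abs_erf_add_erf_le {u : ℝ} (hu : 0 ≤ u) (x : ℝ) :
    |erf (√2 * x) + erf (√2 * (u - x))| ≤ 3 * u := by
  have sqrt_two_le : √2 ≤ 3 / 2 := Real.sqrt_le_iff.2 (by norm_num)
  calc |erf (√2 * x) + erf (√2 * (u - x))|
      = |erf (√2 * x) - erf (-(√2 * (u - x)))| := by rw [erf_neg, sub_neg_eq_add]
    _ ≤ 2 * |√2 * x - -(√2 * (u - x))| := abs_erf_sub_erf_le _ _
    _ = 2 * √2 * u := by
        rw [show √2 * x - -(√2 * (u - x)) = √2 * u by ring, abs_of_nonneg (by positivity)]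
        ring
    _ ≤ 3 * u := by nlinarith

theorem abs_exp_sub_exp_le_mul {u m x : ℝ} (hu : 0 ≤ u) (hu1 : u ≤ 1)
    (hxu : -2 * (x - u) ^ 2 ≤ m) (hx : -2 * x ^ 2 ≤ m) :
    |rexp (-2 * (x - u) ^ 2) - rexp (-2 * x ^ 2)| ≤ rexp m * ((4 * |x| + 2) * u) := by
  have exponent_sub : -2 * (x - u) ^ 2 - -2 * x ^ 2 = (4 * x - 2 * u) * u := by ring
  have abs_slope_le : |4 * x - 2 * u| ≤ 4 * |x| + 2 :=
    abs_le.2 ⟨by linarith [neg_abs_le x], by linarith [le_abs_self x]⟩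
  refine (abs_exp_sub_exp_le hxu hx).trans ?_
  rw [exponent_sub, abs_mul, abs_of_nonneg hu]
  gcongr

theorem abs_gapKernel_le_mul {u : ℝ} (hu : 0 ≤ u) (hu1 : u ≤ 1) (x : ℝ) :
    |gapKernel u x| ≤ 12 * rexp 6 * rexp (-x ^ 2) * u := by
  set m : ℝ := 6 - 3 / 2 * x ^ 2 with hm
  have exponent_sub_le : -2 * (x - u) ^ 2 ≤ m := by nlinarith [sq_nonneg (x - 4 * u)]
  have exponent_le : -2 * x ^ 2 ≤ m := by nlinarith [sq_nonneg x]
  have abs_erf_u_le : |erf u| ≤ 2 * u := by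
    simpa [erf_zero, abs_of_nonneg hu] using abs_erf_sub_erf_le u 0
  have four_mul_abs_le : 9 + 4 * |x| ≤ 12 * rexp (x ^ 2 / 2) := by
    nlinarith [add_one_le_exp (x ^ 2 / 2), sq_abs x, sq_nonneg (|x| - 1)]
  have hsplit : gapKernel u x = (rexp (-2 * (x - u) ^ 2) + rexp (-2 * x ^ 2)) * erf u -
      (rexp (-2 * (x - u) ^ 2) - rexp (-2 * x ^ 2)) * erf (√2 * x) -
        rexp (-2 * x ^ 2) * (erf (√2 * x) + erf (√2 * (u - x))) := by
    rw [gapKernel_eq]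
    ring
  calc |gapKernel u x|
      ≤ (rexp m + rexp m) * (2 * u) + rexp m * ((4 * |x| + 2) * u) * 1 + rexp m * (3 * u) := by
        rw [hsplit]
        refine (abs_sub _ _).trans (add_le_add ((abs_sub _ _).trans (add_le_add ?_ ?_)) ?_)
        · rw [abs_mul, abs_of_pos (by positivity)]
          gcongr
        · rw [abs_mul]
          exact mul_le_mul (abs_exp_sub_exp_le_mul hu hu1 exponent_sub_le exponent_le)
            (abs_erf_le_one _) (abs_nonneg _) (by positivity)
        · rw [abs_mul, Real.abs_exp]
          gcongr
          exact abs_erf_add_erf_le hu x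
    _ = rexp m * (9 + 4 * |x|) * u := by ring
    _ ≤ rexp m * (12 * rexp (x ^ 2 / 2)) * u := by gcongr
    _ = 12 * rexp 6 * rexp (-x ^ 2) * u := by
        have hexp : rexp m * rexp (x ^ 2 / 2) = rexp 6 * rexp (-x ^ 2) := by
          rw [← Real.exp_add, ← Real.exp_add, hm]
          ring_nf
        linear_combination 12 * u * hexp

theorem abs_gapKernel_div_le {u : ℝ} (hu : 0 < u) (x : ℝ) :
    |gapKernel u x / u| ≤ 12 * rexp 7 * (rexp (-(1 / 4) * u ^ 2) * rexp (-(1 / 4) * x ^ 2)) := by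
  rw [abs_div, abs_of_pos hu, div_le_iff₀ hu, ← Real.exp_add, ← mul_add]
  rcases le_total u 1 with hu1 | hu1
  · have hexp : rexp 6 * rexp (-x ^ 2) ≤ rexp 7 * rexp (-(1 / 4) * (u ^ 2 + x ^ 2)) := by
      rw [← Real.exp_add, ← Real.exp_add]
      exact exp_le_exp.2 (by nlinarith)
    calc |gapKernel u x| ≤ 12 * rexp 6 * rexp (-x ^ 2) * u := abs_gapKernel_le_mul hu.le hu1 x
      _ = 12 * (rexp 6 * rexp (-x ^ 2)) * u := by ring
      _ ≤ 12 * (rexp 7 * rexp (-(1 / 4) * (u ^ 2 + x ^ 2))) * u := by gcongr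
      _ = 12 * rexp 7 * rexp (-(1 / 4) * (u ^ 2 + x ^ 2)) * u := by ring
  · calc |gapKernel u x| ≤ 4 * rexp (-(1 / 4) * (u ^ 2 + x ^ 2)) := abs_gapKernel_le hu.le x
      _ = 4 * 1 * rexp (-(1 / 4) * (u ^ 2 + x ^ 2)) * 1 := by ring
      _ ≤ 12 * rexp 7 * rexp (-(1 / 4) * (u ^ 2 + x ^ 2)) * u := by
          gcongr
          · norm_num
          · exact one_le_exp (by norm_num)

theorem integrable_gapKernel_div :
    Integrable (fun z : ℝ × ℝ => gapKernel z.1 z.2 / z.1)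
      ((volume.restrict (Ioi 0)).prod volume) := by
  have hgauss : Integrable fun x : ℝ => rexp (-(1 / 4) * x ^ 2) :=
    integrable_exp_neg_mul_sq (by norm_num)
  refine ((hgauss.restrict (s := Ioi 0)).mul_prod hgauss).const_mul (12 * rexp 7) |>.mono'
    (Measurable.aestronglyMeasurable ?_) ?_
  · have hcont : Continuous fun z : ℝ × ℝ => gapKernel z.1 z.2 := by fun_prop
    exact hcont.measurable.div measurable_fst
  · have hpos : ∀ᵐ z ∂(volume.restrict (Ioi (0 : ℝ))).prod (volume : Measure ℝ), 0 < z.1 :=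
      Measure.quasiMeasurePreserving_fst.ae (ae_restrict_mem measurableSet_Ioi)
    filter_upwards [hpos] with z hz using abs_gapKernel_div_le hz z.2

/-- The integral of the integrand of `A₄` over the gap `u = t₁ - t₂` at fixed `x = y - t₂`. -/
noncomputable def gapIntegral (x : ℝ) : ℝ := ∫ u in Ioi 0, gapKernel u x / u

theorem integrable_gapIntegral : Integrable gapIntegral :=
  integrable_gapKernel_div.integral_prod_right

theorem norm_gapKernel_div_le {u : ℝ} (hu : 0 < u) (x : ℝ) :
    ‖gapKernel u x / u‖ ≤ 12 * rexp 7 * rexp (-(1 / 4) * u ^ 2) := by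
  refine (abs_gapKernel_div_le hu x).trans ?_
  gcongr
  exact mul_le_of_le_one_right (exp_pos _).le (exp_le_one_iff.2 (by nlinarith))

theorem integrableOn_const_mul_exp_neg_mul_sq {a : ℝ} (ha : 0 < a) (C : ℝ) (s : Set ℝ) :
    IntegrableOn (fun u => C * rexp (-a * u ^ 2)) s :=
  ((integrable_exp_neg_mul_sq ha).const_mul C).integrableOn

theorem measurable_gapKernel_div (x : ℝ) : Measurable fun u => gapKernel u x / u := by
  have hcont : Continuous fun u => gapKernel u x := by fun_prop
  exact hcont.measurable.div measurable_id

theorem integrableOn_gapKernel_div (x : ℝ) :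
    IntegrableOn (fun u => gapKernel u x / u) (Ioi 0) := by
  refine (integrableOn_const_mul_exp_neg_mul_sq (a := 1 / 4) (by norm_num) (12 * rexp 7) _).mono'
    (measurable_gapKernel_div x).aestronglyMeasurable ?_
  filter_upwards [ae_restrict_mem measurableSet_Ioi] with u hu using norm_gapKernel_div_le hu x

theorem continuous_gapIntegral : Continuous gapIntegral := by
  refine continuous_of_dominated (fun x => (measurable_gapKernel_div x).aestronglyMeasurable)
    (fun x => ?_)
    (integrableOn_const_mul_exp_neg_mul_sq (a := 1 / 4) (by norm_num) (12 * rexp 7) _)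
    (ae_of_all _ fun u => by fun_prop)
  filter_upwards [ae_restrict_mem measurableSet_Ioi] with u hu using norm_gapKernel_div_le hu x

theorem integral_gapIntegral : ∫ x, gapIntegral x = 0 := by
  simp only [gapIntegral]
  rw [← integral_integral_swap integrable_gapKernel_div]
  simp only [integral_div, integral_gapKernel, zero_div, integral_zero]

theorem A₄_eq_integral_gapIntegral (y : ℝ) :
    A₄ y = -(1 / √(2 * π)) * ∫ x in Iic y, gapIntegral x := by
  have hint : IntegrableOn (Function.uncurry fun u t => gapKernel u (y - t) / u)
      (Ioi 0 ×ˢ Ioi 0) := by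
    have hshift := ((MeasurePreserving.id (volume.restrict (Ioi (0 : ℝ)))).prod
      (Measure.measurePreserving_sub_left volume y)).integrable_comp_of_integrable
        integrable_gapKernel_div
    rw [IntegrableOn, Measure.volume_eq_prod, ← Measure.prod_restrict]
    exact hshift.mono_measure (Measure.prod_mono le_rfl Measure.restrict_le_self)
  have integrand_eq (t₁ t₂ : ℝ) : 1 / (t₁ - t₂) *
      (rexp (-2 * (t₁ - y) ^ 2) * (erf (t₁ - t₂) + erf (√2 * (t₂ - y))) +
        rexp (-2 * (t₂ - y) ^ 2) * (erf (t₁ - t₂) - erf (√2 * (t₁ - y)))) =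
      gapKernel (t₁ - t₂) (y - t₂) / (t₁ - t₂) := by
    rw [gapKernel_eq, ← neg_sub t₂ y, mul_neg, erf_neg]
    ring_nf
  simp only [A₄, integrand_eq]
  rw [integral_Ioi_integral_Ioo_comp_sub (F := fun u t => gapKernel u (y - t) / u) hint,
    ← integral_Ioi_comp_sub_left]
  rfl

theorem continuousOn_erfc_div : ContinuousOn (fun u => erfc u / u) (Ici 1) :=
  continuous_erfc.continuousOn.div continuousOn_id fun _ hu => (zero_lt_one.trans_le hu).ne'

theorem abs_integral_Ioc_gapKernel_div_le (x : ℝ) :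
    |∫ u in Ioc 0 1, gapKernel u x / u| ≤ 12 * rexp 6 * rexp (-x ^ 2) := by
  have h : ∀ u ∈ Ioc (0 : ℝ) 1, ‖gapKernel u x / u‖ ≤ 12 * rexp 6 * rexp (-x ^ 2) := by
    intro u hu
    rw [Real.norm_eq_abs, abs_div, abs_of_pos hu.1, div_le_iff₀ hu.1]
    exact abs_gapKernel_le_mul hu.1.le hu.2 x
  simpa using norm_setIntegral_le_of_norm_le_const (μ := volume) measure_Ioc_lt_top h

theorem abs_integral_Ioi_gapKernel_div_add_le {x : ℝ} (hx : 0 ≤ x) :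
    |∫ u in Ioi 1, (gapKernel u x / u + rexp (-2 * (u - x) ^ 2) * (erfc u / u))| ≤
      3 * √(π / (2 / 3)) * rexp (-x ^ 2) := by
  have hint := integrableOn_const_mul_exp_neg_mul_sq (by norm_num : (0 : ℝ) < 2 / 3)
    (3 * rexp (-x ^ 2))
  have integrand_le (u : ℝ) (hu : 1 < u) :
      ‖gapKernel u x / u + rexp (-2 * (u - x) ^ 2) * (erfc u / u)‖ ≤
        3 * rexp (-x ^ 2) * rexp (-(2 / 3) * u ^ 2) := by
    calc ‖gapKernel u x / u + rexp (-2 * (u - x) ^ 2) * (erfc u / u)‖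
        = |gapKernel u x + rexp (-2 * (x - u) ^ 2) * erfc u| / u := by
          rw [← abs_of_pos (zero_lt_one.trans hu), ← abs_div, abs_of_pos (zero_lt_one.trans hu),
            sub_sq_comm, Real.norm_eq_abs]
          ring_nf
      _ ≤ |gapKernel u x + rexp (-2 * (x - u) ^ 2) * erfc u| := div_le_self (abs_nonneg _) hu.le
      _ ≤ 3 * rexp (-x ^ 2 - 2 / 3 * u ^ 2) := abs_gapKernel_add_le (zero_le_one.trans hu.le) hx
      _ = 3 * rexp (-x ^ 2) * rexp (-(2 / 3) * u ^ 2) := by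
          rw [mul_assoc, ← Real.exp_add, neg_mul, sub_eq_add_neg]
  calc |∫ u in Ioi 1, (gapKernel u x / u + rexp (-2 * (u - x) ^ 2) * (erfc u / u))|
      ≤ ∫ u in Ioi 1, 3 * rexp (-x ^ 2) * rexp (-(2 / 3) * u ^ 2) :=
        norm_integral_le_of_norm_le (hint _)
          ((ae_restrict_mem measurableSet_Ioi).mono integrand_le)
    _ ≤ ∫ u, 3 * rexp (-x ^ 2) * rexp (-(2 / 3) * u ^ 2) :=
        setIntegral_le_integral (integrableOn_univ.1 (hint _)) (ae_of_all _ fun u => by positivity)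
    _ = 3 * √(π / (2 / 3)) * rexp (-x ^ 2) := by
        rw [integral_const_mul, integral_gaussian]
        ring

theorem abs_gapIntegral_add_le {x : ℝ} (hx : 0 ≤ x) :
    |gapIntegral x + ∫ u in Ioi 1, rexp (-2 * (u - x) ^ 2) * (erfc u / u)| ≤
      (12 * rexp 6 + 3 * √(π / (2 / 3))) * rexp (-x ^ 2) := by
  have integrableOn_erfc :
      IntegrableOn (fun u => rexp (-2 * (u - x) ^ 2) * (erfc u / u)) (Ioi 1) :=
    integrableOn_Ioi_exp_mul_of_tendsto two_pos continuousOn_erfc_div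
      (tendsto_erfc_atTop.div_atTop tendsto_id) x
  have integrableOn_Ioc := (integrableOn_gapKernel_div x).mono_set
    (Ioc_subset_Ioi_self : Ioc (0 : ℝ) 1 ⊆ Ioi 0)
  have integrableOn_Ioi := (integrableOn_gapKernel_div x).mono_set
    (Ioi_subset_Ioi zero_le_one)
  rw [gapIntegral, ← Ioc_union_Ioi_eq_Ioi zero_le_one, setIntegral_union Ioc_disjoint_Ioi_same
    measurableSet_Ioi integrableOn_Ioc integrableOn_Ioi, add_assoc,
    ← integral_add integrableOn_Ioi integrableOn_erfc, add_mul]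
  exact (abs_add_le _ _).trans
    (add_le_add (abs_integral_Ioc_gapKernel_div_le x) (abs_integral_Ioi_gapKernel_div_add_le hx))

theorem tendsto_pow_mul_exp_mul_gapIntegral :
    Tendsto (fun x => x ^ 2 * rexp (2 / 3 * x ^ 2) * gapIntegral x) atTop
      (𝓝 (-(1 / √π * (3 / 2) ^ 2 * √(π / 3)))) := by
  have tendsto_erfc_div :
      Tendsto (fun u => u ^ 2 * rexp (1 * u ^ 2) * (erfc u / u)) atTop (𝓝 (1 / √π)) := by
    refine tendsto_pow_mul_exp_mul_erfc.congr' ?_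
    filter_upwards [eventually_gt_atTop 0] with u hu
    field_simp
  have laplace := tendsto_pow_mul_exp_mul_integral_Ioi (a := 2) two_pos zero_le_one
    continuousOn_erfc_div tendsto_erfc_div
  have remainder := tendsto_pow_mul_exp_mul_zero_of_isBigO (c := 2 / 3) (d := 1) (by norm_num) 2
    (r := fun x => gapIntegral x + ∫ u in Ioi 1, rexp (-2 * (u - x) ^ 2) * (erfc u / u))
    (IsBigO.of_bound (12 * rexp 6 + 3 * √(π / (2 / 3))) <| by
      filter_upwards [eventually_ge_atTop 0] with x hx
      simpa using abs_gapIntegral_add_le hx)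
  have h := remainder.sub laplace
  norm_num only [zero_sub] at h ⊢
  refine h.congr fun x => ?_
  ring

theorem tendsto_pow_mul_exp_mul_A₄ :
    Tendsto (fun y => y ^ 3 * rexp (2 / 3 * y ^ 2) * A₄ y) atTop
      (𝓝 (-(1 / √(2 * π)) * (1 / √π * (3 / 2) ^ 2 * √(π / 3) / (2 * (2 / 3))))) := by
  have tendsto_zero : Tendsto (fun y => ∫ x in Iic y, gapIntegral x) atTop (𝓝 0) :=
    integral_gapIntegral ▸ (aecover_Iic tendsto_id).integral_tendsto_of_countably_generated
      integrable_gapIntegral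
  have h := tendsto_pow_succ_mul_exp_mul_of_hasDerivAt (by norm_num : (0 : ℝ) < 2 / 3)
    (.of_forall (hasDerivAt_integral_Iic continuous_gapIntegral integrable_gapIntegral))
    tendsto_zero tendsto_pow_mul_exp_mul_gapIntegral
  rw [neg_neg] at h
  refine (h.const_mul (-(1 / √(2 * π)))).congr fun y => ?_
  rw [A₄_eq_integral_gapIntegral]
  ring

theorem add_limits_eq :
    -(2 / √(2 * π)) * (1 / (4 * √π) * (3 / 2) ^ 3 * √(π / 3)) + 0 +
      -(1 / √(2 * π)) * (1 / √π * (3 / 2) ^ 2 * √(π / 3) / (2 * (2 / 3))) =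
    -(1 / (2 * √π)) * (3 / 2) ^ (5 / 2 : ℝ) := by
  have rpow_eq : (3 / 2 : ℝ) ^ (5 / 2 : ℝ) = (3 / 2) ^ 2 * (√3 / √2) := by
    rw [show (5 / 2 : ℝ) = (2 : ℕ) + 1 / 2 by norm_num, rpow_add (by norm_num), rpow_natCast,
      ← sqrt_eq_rpow, sqrt_div zero_le_three]
  rw [rpow_eq, sqrt_mul zero_le_two, sqrt_div pi_nonneg]
  field_simp
  norm_num

/-- Inside the droplet, `A(y) ∼ −(1/(2√π)) (3/2)^{5/2} e^{−2y²/3}/y³` as `y → +∞`. -/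
theorem A_asymptotics_inside :
    Tendsto (fun y : ℝ => A y * y ^ 3 * Real.exp (2 * y ^ 2 / 3))
      atTop (nhds (-(1 / (2 * Real.sqrt Real.pi)) * ((3 : ℝ) / 2) ^ ((5 : ℝ) / 2))) := by
  rw [← add_limits_eq]
  refine ((tendsto_pow_mul_exp_mul_A₁_add_A₂.add tendsto_pow_mul_exp_mul_A₃).add
    tendsto_pow_mul_exp_mul_A₄).congr fun y => ?_
  rw [A, ← div_mul_eq_mul_div]
  ring
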